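/- arXiv:2212.04396 — 2 statements merged into one kernel-verified Lean document; each statement's English description precedes it below -/
import Mathlib

section
/- Assume 𝒱 ≠ {0}, fix (M̂,N̂) ∈ ℱ(𝒱), a basis matrix V* of 𝒱*, and B̂_N with B N̂ = V* B̂_N. Suppose conditions (i) and (ii) of Theorem 1 do not hold and that ker((E+FM̂)V*) equals the controllable subspace of the pair ((A+BM̂)|_{V*}, B̂_N) (the column span of [B̂_N, Φ B̂_N, …, Φ^{d−1} B̂_N] with Φ := (A+BM̂)|_{V*}). Then the system Σ^Δ is vulnerable if and only if the complexification of (A+BM̂)|_{V*} has an eigenvalue λ ∈ ℂ with |λ| ≥ 1 whose generalized eigenspace is not contained in the kernel of the complexification of (E+FM̂)V*. -/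
/-!
Write `H = (E + F Mh) Vst`. The kernel of `H` is a controllable subspace, hence `Φh`-invariant and
containing the range of `BN`; so `Φh` induces a map on `ℝ^d / ker H`, and the spectral condition
says precisely that this induced map is not Schur stable.

*Unstable implies vulnerable* (`not_detectable_of_unstable`). Some `v` outside `ker H` is an
eigenvector of `Φh` modulo `ker H`, with `‖λ‖ ≥ 1`. Every state in the range of `Vst` can be reached
from the origin in `n` steps, and the feedback `Mh` keeps the output at zero from there on.
Superposing many such small injections along `Re (μ v)`, with phases `μ` aligned at the final time,
makes `z` arbitrarily large while each block of `n` steps only pays the output cost of a single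
injection. This treats `‖λ‖ = 1` and `‖λ‖ > 1` alike.

*Stable implies detectable* (`detectable_of_stable`). If `‖y‖ ≤ Y` throughout, the state stays
within `O(Y)` of `V` (`nullK_bound`, from strong observability modulo `V`). A step that stays exactly
in `V ∩ ctrlSubspace A B` with zero output satisfies `z = (E + F Mh) x`, and this vector evolves by
the map `Ψ` induced by `Φh` (`outputNulling_step`; here the failure of the two conditions enters).
Both identities are linear, so they hold up to `O(Y)` along the trajectory, and stability of `Ψ`
bounds `z` by a multiple of `Y`. Stability is used as absolute summability of `H Φh ^ i ξ`
(`summable_observed`), proved on each generalized eigenspace by induction on the nilpotency order.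
-/

open Matrix

noncomputable section

/-- The linear map between Euclidean spaces induced by a real matrix. -/
def matL {ι κ : Type*} [Fintype ι] [Fintype κ] [DecidableEq κ]
    (A : Matrix ι κ ℝ) : EuclideanSpace ℝ κ →ₗ[ℝ] EuclideanSpace ℝ ι :=
  Matrix.toEuclideanLin A

variable {ι κ ρ σ : Type*} [Fintype ι] [DecidableEq ι] [Fintype κ] [DecidableEq κ]
  [Fintype ρ] [DecidableEq ρ] [Fintype σ] [DecidableEq σ]

/-- State trajectory of `x_{k+1} = A x_k + B a_k` from initial state `x0`
and input sequence `a`. -/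
def stateTraj (A : Matrix ι ι ℝ) (B : Matrix ι κ ℝ)
    (x0 : EuclideanSpace ℝ ι) (a : ℕ → EuclideanSpace ℝ κ) :
    ℕ → EuclideanSpace ℝ ι
  | 0 => x0
  | k + 1 => matL A (stateTraj A B x0 a k) + matL B (a k)

/-- Output trajectory `y_k = C x_k + D a_k` of the system. -/
def outTraj (A : Matrix ι ι ℝ) (B : Matrix ι κ ℝ)
    (C : Matrix ρ ι ℝ) (D : Matrix ρ κ ℝ)
    (x0 : EuclideanSpace ℝ ι) (a : ℕ → EuclideanSpace ℝ κ) (k : ℕ) :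
    EuclideanSpace ℝ ρ :=
  matL C (stateTraj A B x0 a k) + matL D (a k)

/-- `W` is an output-nulling subspace for the system `(A,B,C,D)`. -/
def IsOutputNulling (A : Matrix ι ι ℝ) (B : Matrix ι κ ℝ)
    (C : Matrix ρ ι ℝ) (D : Matrix ρ κ ℝ)
    (W : Submodule ℝ (EuclideanSpace ℝ ι)) : Prop :=
  ∃ M : Matrix κ ι ℝ,
    (∀ v ∈ W, matL (A + B * M) v ∈ W) ∧ (∀ v ∈ W, matL (C + D * M) v = 0)

/-- `V` is the maximal output-nulling subspace for the system `(A,B,C,D)`. -/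
def IsMaxOutputNulling (A : Matrix ι ι ℝ) (B : Matrix ι κ ℝ)
    (C : Matrix ρ ι ℝ) (D : Matrix ρ κ ℝ)
    (V : Submodule ℝ (EuclideanSpace ℝ ι)) : Prop :=
  IsOutputNulling A B C D V ∧
    ∀ W : Submodule ℝ (EuclideanSpace ℝ ι), IsOutputNulling A B C D W → W ≤ V

/-- `(M, N)` is a friend of the (maximal output-nulling) subspace `V`. -/
def IsFriend (A : Matrix ι ι ℝ) (B : Matrix ι κ ℝ)
    (C : Matrix ρ ι ℝ) (D : Matrix ρ κ ℝ)
    (V : Submodule ℝ (EuclideanSpace ℝ ι))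
    (M : Matrix κ ι ℝ) (N : Matrix κ σ ℝ) : Prop :=
  (∀ v ∈ V, matL (A + B * M) v ∈ V) ∧
  (∀ v ∈ V, matL (C + D * M) v = 0) ∧
  (LinearMap.range (matL N) ≤ LinearMap.ker (matL D)) ∧
  (LinearMap.range (matL (B * N)) =
    (LinearMap.ker (matL D)).map (matL B) ⊓ V)

/-- The system (with zero initial state, no noise) is detectable: some severity
threshold `δ` is always revealed at output level `ε`. -/
def Detectable {n m p r : ℕ}
    (A : Matrix (Fin n) (Fin n) ℝ) (B : Matrix (Fin n) (Fin m) ℝ)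
    (C : Matrix (Fin p) (Fin n) ℝ) (D : Matrix (Fin p) (Fin m) ℝ)
    (E : Matrix (Fin r) (Fin n) ℝ) (F : Matrix (Fin r) (Fin m) ℝ) : Prop :=
  ∃ δ : ℝ, 0 < δ ∧ ∃ ε : ℝ, 0 < ε ∧
    ∀ a : ℕ → EuclideanSpace ℝ (Fin m),
      (∃ kz : ℕ, δ ≤ ‖outTraj A B E F 0 a kz‖) →
      ∃ ky : ℕ, ε ≤ ‖outTraj A B C D 0 a ky‖

/-- The controllable subspace of the pair `(A, B)`. -/
def ctrlSubspace {n m : ℕ}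
    (A : Matrix (Fin n) (Fin n) ℝ) (B : Matrix (Fin n) (Fin m) ℝ) :
    Submodule ℝ (EuclideanSpace ℝ (Fin n)) :=
  ⨆ j : Fin n, LinearMap.range (matL (A ^ (j : ℕ) * B))

set_option linter.unusedSectionVars false

/-! ### Matrices as linear maps, and bounds from kernel inclusions -/

lemma matL_apply (A : Matrix ι κ ℝ) (x : EuclideanSpace ℝ κ) :
    matL A x = WithLp.toLp 2 (A *ᵥ x.ofLp) := rfl

lemma matL_add_apply (A A' : Matrix ι κ ℝ) (x : EuclideanSpace ℝ κ) :
    matL (A + A') x = matL A x + matL A' x := by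
  simp [matL]

lemma matL_mul_apply (A : Matrix ι κ ℝ) (A' : Matrix κ ρ ℝ) (x : EuclideanSpace ℝ ρ) :
    matL (A * A') x = matL A (matL A' x) := by
  simp [matL_apply, Matrix.mulVec_mulVec]

lemma matL_one_apply (x : EuclideanSpace ℝ κ) : matL (1 : Matrix κ κ ℝ) x = x := by
  simp [matL_apply]

/-- Every linear map between real vector spaces has a generalized inverse. -/
lemma exists_genInverse {X Y : Type*} [AddCommGroup X] [Module ℝ X] [AddCommGroup Y] [Module ℝ Y]
    (f : X →ₗ[ℝ] Y) : ∃ g : Y →ₗ[ℝ] X, ∀ x, f (g (f x)) = f x := by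
  obtain ⟨g, hg⟩ := f.rangeRestrict.exists_rightInverse_of_surjective f.range_rangeRestrict
  obtain ⟨g', hg'⟩ := LinearMap.exists_extend g
  refine ⟨g', fun x => ?_⟩
  have h1 : g' (f x) = g (f.rangeRestrict x) := by
    rw [← hg']; rfl
  rw [h1]
  have h2 := congrArg Subtype.val (LinearMap.congr_fun hg (f.rangeRestrict x))
  simpa using h2

lemma exists_bound_of_ker_le {X Y Z : Type*} [AddCommGroup X] [Module ℝ X]
    [NormedAddCommGroup Y] [NormedSpace ℝ Y] [FiniteDimensional ℝ Y]
    [NormedAddCommGroup Z] [NormedSpace ℝ Z]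
    (f : X →ₗ[ℝ] Y) (g : X →ₗ[ℝ] Z) (h : ∀ x, f x = 0 → g x = 0) :
    ∃ c : ℝ, 0 ≤ c ∧ ∀ x, ‖g x‖ ≤ c * ‖f x‖ := by
  obtain ⟨i, hi⟩ := exists_genInverse f
  let T : Y →L[ℝ] Z := LinearMap.toContinuousLinearMap (g ∘ₗ i)
  refine ⟨‖T‖, norm_nonneg _, fun x => ?_⟩
  have h1 : g x = T (f x) := by
    have := h (x - i (f x)) (by rw [map_sub, hi, sub_self])
    rw [map_sub, sub_eq_zero] at this
    exact this
  rw [h1]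
  exact T.le_opNorm _

lemma exists_ker_eq {X : Type*} [AddCommGroup X] [Module ℝ X] (W : Submodule ℝ X) :
    ∃ q : X →ₗ[ℝ] X, ∀ x, q x = 0 ↔ x ∈ W := by
  obtain ⟨W', hW⟩ := W.exists_isCompl
  refine ⟨W'.subtype ∘ₗ W'.projectionOnto W hW.symm, fun x => ?_⟩
  simp

/-! ### Reachability -/

lemma stateTraj_congr (A : Matrix ι ι ℝ) (B : Matrix ι κ ℝ) (x0 : EuclideanSpace ℝ ι)
    {a b : ℕ → EuclideanSpace ℝ κ} (k : ℕ) (h : ∀ i < k, a i = b i) :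
    stateTraj A B x0 a k = stateTraj A B x0 b k := by
  induction k with
  | zero => rfl
  | succ k ih =>
    simp only [stateTraj]
    rw [ih fun i hi => h i (by omega), h k (by omega)]

lemma stateTraj_comb (A : Matrix ι ι ℝ) (B : Matrix ι κ ℝ) (s t : ℝ)
    (a b : ℕ → EuclideanSpace ℝ κ) (k : ℕ) :
    stateTraj A B 0 (fun i => s • a i + t • b i) k =
      s • stateTraj A B 0 a k + t • stateTraj A B 0 b k := by
  induction k with
  | zero => simp [stateTraj]
  | succ k ih =>
    simp only [stateTraj, ih, map_add, map_smul, smul_add]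
    abel

lemma outTraj_comb (A : Matrix ι ι ℝ) (B : Matrix ι κ ℝ)
    (C : Matrix ρ ι ℝ) (D : Matrix ρ κ ℝ) (s t : ℝ)
    (a b : ℕ → EuclideanSpace ℝ κ) (k : ℕ) :
    outTraj A B C D 0 (fun i => s • a i + t • b i) k =
      s • outTraj A B C D 0 a k + t • outTraj A B C D 0 b k := by
  simp only [outTraj, stateTraj_comb, map_add, map_smul, smul_add]
  abel

/-- Cayley-Hamilton: higher powers contribute nothing new to the controllable subspace. -/
lemma pow_mem_ctrl {n m : ℕ} (A : Matrix (Fin n) (Fin n) ℝ) (B : Matrix (Fin n) (Fin m) ℝ)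
    (j : ℕ) (w : EuclideanSpace ℝ (Fin m)) :
    matL (A ^ j * B) w ∈ ctrlSubspace A B := by
  rcases Nat.eq_zero_or_pos n with rfl | hn
  · rw [Subsingleton.elim (matL (A ^ j * B) w) 0]
    exact zero_mem _
  have : Nontrivial (Matrix (Fin n) (Fin n) ℝ) := by
    have : Nonempty (Fin n) := ⟨⟨0, hn⟩⟩
    infer_instance
  have hdeg : (Polynomial.X ^ j %ₘ A.charpoly).natDegree < n := by
    have h1 := Polynomial.natDegree_modByMonic_lt (Polynomial.X ^ j : Polynomial ℝ)
      A.charpoly_monic (by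
        intro h
        have := A.charpoly_natDegree_eq_dim
        rw [h] at this
        simp at this
        omega)
    simpa using h1
  rw [Matrix.pow_eq_aeval_mod_charpoly, Polynomial.aeval_eq_sum_range' hdeg, Matrix.sum_mul]
  have : matL (∑ i ∈ Finset.range n,
      ((Polynomial.X ^ j %ₘ A.charpoly).coeff i • A ^ i) * B) w =
      ∑ i ∈ Finset.range n,
        (Polynomial.X ^ j %ₘ A.charpoly).coeff i • matL (A ^ i * B) w := by
    simp [matL]
  rw [this]
  refine Submodule.sum_mem _ fun i hi => Submodule.smul_mem _ _ ?_
  exact Submodule.mem_iSup_of_mem (⟨i, Finset.mem_range.1 hi⟩ : Fin n) ⟨w, rfl⟩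

lemma ctrl_invariant {n m : ℕ} (A : Matrix (Fin n) (Fin n) ℝ) (B : Matrix (Fin n) (Fin m) ℝ)
    {x : EuclideanSpace ℝ (Fin n)} (hx : x ∈ ctrlSubspace A B) :
    matL A x ∈ ctrlSubspace A B := by
  have : ctrlSubspace A B ≤ (ctrlSubspace A B).comap (matL A) := by
    refine iSup_le fun j => ?_
    rintro _ ⟨w, rfl⟩
    rw [Submodule.mem_comap, ← matL_mul_apply, ← Matrix.mul_assoc, ← pow_succ']
    exact pow_mem_ctrl A B _ w
  exact this hx

lemma input_mem_ctrl {n m : ℕ} (A : Matrix (Fin n) (Fin n) ℝ) (B : Matrix (Fin n) (Fin m) ℝ)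
    (w : EuclideanSpace ℝ (Fin m)) : matL B w ∈ ctrlSubspace A B := by
  simpa using pow_mem_ctrl A B 0 w

lemma stateTraj_mem_ctrl {n m : ℕ} (A : Matrix (Fin n) (Fin n) ℝ) (B : Matrix (Fin n) (Fin m) ℝ)
    (a : ℕ → EuclideanSpace ℝ (Fin m)) (k : ℕ) :
    stateTraj A B 0 a k ∈ ctrlSubspace A B := by
  induction k with
  | zero => exact zero_mem _
  | succ k ih => exact add_mem (ctrl_invariant A B ih) (input_mem_ctrl A B _)

/-- The subspace of states reachable from the origin in exactly `k` steps. -/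
def reachK (A : Matrix ι ι ℝ) (B : Matrix ι κ ℝ) : ℕ → Submodule ℝ (EuclideanSpace ℝ ι)
  | 0 => ⊥
  | k + 1 => (reachK A B k).map (matL A) ⊔ LinearMap.range (matL B)

lemma reachK_mono (A : Matrix ι ι ℝ) (B : Matrix ι κ ℝ) : Monotone (reachK A B) := by
  refine monotone_nat_of_le_succ fun k => ?_
  induction k with
  | zero => exact bot_le
  | succ k ih => exact sup_le_sup_right (Submodule.map_mono ih) _

lemma exists_input_of_mem_reachK (A : Matrix ι ι ℝ) (B : Matrix ι κ ℝ) (k : ℕ) :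
    ∀ x ∈ reachK A B k, ∃ b, stateTraj A B 0 b k = x := by
  induction k with
  | zero =>
    intro x hx
    exact ⟨0, ((Submodule.mem_bot ℝ).1 hx).symm⟩
  | succ k ih =>
    intro x hx
    obtain ⟨_, ⟨y, hy, rfl⟩, _, ⟨w, rfl⟩, rfl⟩ := Submodule.mem_sup.1 hx
    obtain ⟨b, rfl⟩ := ih y hy
    refine ⟨Function.update b k w, ?_⟩
    simp only [stateTraj, Function.update_self]
    rw [stateTraj_congr A B 0 (b := b) k fun i hi => Function.update_of_ne (by omega) _ _]

lemma ctrl_le_reachK {n m : ℕ} (A : Matrix (Fin n) (Fin n) ℝ) (B : Matrix (Fin n) (Fin m) ℝ) :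
    ctrlSubspace A B ≤ reachK A B n := by
  have h : ∀ j : ℕ, LinearMap.range (matL (A ^ j * B)) ≤ reachK A B (j + 1) := by
    intro j
    induction j with
    | zero => simp [reachK]
    | succ j ih =>
      rintro _ ⟨w, rfl⟩
      rw [pow_succ', Matrix.mul_assoc, matL_mul_apply]
      exact Submodule.mem_sup_left (Submodule.mem_map_of_mem (ih ⟨w, rfl⟩))
  exact iSup_le fun j => (h j).trans (reachK_mono A B j.2)

/-! ### Small outputs keep the state near the maximal output-nulling subspace -/

/-- The states from which the output can be kept at zero for `k` steps. -/
def nullK (A : Matrix ι ι ℝ) (B : Matrix ι κ ℝ) (C : Matrix ρ ι ℝ) (D : Matrix ρ κ ℝ) :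
    ℕ → Submodule ℝ (EuclideanSpace ℝ ι)
  | 0 => ⊤
  | k + 1 => (((nullK A B C D k).comap ((matL A).coprod (matL B))) ⊓
      LinearMap.ker ((matL C).coprod (matL D))).map (LinearMap.fst ℝ _ _)

lemma mem_nullK_succ (A : Matrix ι ι ℝ) (B : Matrix ι κ ℝ) (C : Matrix ρ ι ℝ) (D : Matrix ρ κ ℝ)
    (k : ℕ) (x : EuclideanSpace ℝ ι) :
    x ∈ nullK A B C D (k + 1) ↔
      ∃ u, matL A x + matL B u ∈ nullK A B C D k ∧ matL C x + matL D u = 0 := by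
  simp [nullK]

lemma nullK_antitone (A : Matrix ι ι ℝ) (B : Matrix ι κ ℝ) (C : Matrix ρ ι ℝ)
    (D : Matrix ρ κ ℝ) : Antitone (nullK A B C D) := by
  refine antitone_nat_of_succ_le fun k => ?_
  induction k with
  | zero => exact le_top
  | succ k ih =>
    intro x hx
    rw [mem_nullK_succ] at hx ⊢
    obtain ⟨u, h1, h2⟩ := hx
    exact ⟨u, ih h1, h2⟩

/-- A subspace on which output-nulling controls exist pointwise admits a linear feedback. -/
lemma isOutputNulling_of_forall (A : Matrix ι ι ℝ) (B : Matrix ι κ ℝ) (C : Matrix ρ ι ℝ)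
    (D : Matrix ρ κ ℝ) (W : Submodule ℝ (EuclideanSpace ℝ ι))
    (h : ∀ x ∈ W, ∃ u, matL A x + matL B u ∈ W ∧ matL C x + matL D u = 0) :
    IsOutputNulling A B C D W := by
  -- `S` is the space of admissible pairs (state, control); it projects onto `W`.
  let S : Submodule ℝ (EuclideanSpace ℝ ι × EuclideanSpace ℝ κ) :=
    (W.comap (LinearMap.fst ℝ _ _)) ⊓ ((W.comap ((matL A).coprod (matL B))) ⊓
      LinearMap.ker ((matL C).coprod (matL D)))
  let f : S →ₗ[ℝ] W := ((LinearMap.fst ℝ _ _).comp S.subtype).codRestrict W fun z => z.2.1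
  have hf : LinearMap.range f = ⊤ := by
    rw [LinearMap.range_eq_top]
    rintro ⟨x, hx⟩
    obtain ⟨u, h1, h2⟩ := h x hx
    exact ⟨⟨(x, u), hx, by simpa using h1, by simpa using h2⟩, rfl⟩
  obtain ⟨g, hg⟩ := f.exists_rightInverse_of_surjective hf
  obtain ⟨M', hM'⟩ := LinearMap.exists_extend
    ((LinearMap.snd ℝ (EuclideanSpace ℝ ι) (EuclideanSpace ℝ κ)) ∘ₗ S.subtype ∘ₗ g)
  have key : ∀ x (hx : x ∈ W), matL A x + matL B (M' x) ∈ W ∧ matL C x + matL D (M' x) = 0 := by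
    intro x hx
    have h1 : ((g ⟨x, hx⟩ : S) : EuclideanSpace ℝ ι × EuclideanSpace ℝ κ).1 = x :=
      congrArg Subtype.val (LinearMap.congr_fun hg ⟨x, hx⟩)
    have h2 : M' x = ((g ⟨x, hx⟩ : S) : EuclideanSpace ℝ ι × EuclideanSpace ℝ κ).2 :=
      LinearMap.congr_fun hM' ⟨x, hx⟩
    have h3 := (g ⟨x, hx⟩).2.2
    rw [h2]
    nth_rewrite 1 [← h1]
    nth_rewrite 3 [← h1]
    exact ⟨by simpa using h3.1, by simpa using h3.2⟩
  refine ⟨Matrix.toEuclideanLin.symm M', ?_, ?_⟩ <;> intro x hx <;>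
    rw [matL_add_apply, matL_mul_apply] <;>
    rw [show matL (Matrix.toEuclideanLin.symm M') = M' from
      Matrix.toEuclideanLin.apply_symm_apply M']
  · exact (key x hx).1
  · exact (key x hx).2

/-- The nonincreasing chain `nullK` stabilizes, at an output-nulling subspace. -/
lemma exists_nullK_le (A : Matrix ι ι ℝ) (B : Matrix ι κ ℝ) (C : Matrix ρ ι ℝ)
    (D : Matrix ρ κ ℝ) (V : Submodule ℝ (EuclideanSpace ℝ ι))
    (hV : IsMaxOutputNulling A B C D V) : ∃ N, nullK A B C D N ≤ V := by
  obtain ⟨N, hN⟩ := IsArtinian.monotone_stabilizes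
    (⟨fun k => OrderDual.toDual (nullK A B C D k), fun _ _ h => nullK_antitone A B C D h⟩ :
      ℕ →o (Submodule ℝ (EuclideanSpace ℝ ι))ᵒᵈ)
  have hN' : nullK A B C D N = nullK A B C D (N + 1) := hN (N + 1) (by omega)
  refine ⟨N, hV.2 _ (isOutputNulling_of_forall A B C D _ fun x hx => ?_)⟩
  rw [hN', mem_nullK_succ] at hx
  exact hx

/-- Along any trajectory whose outputs are bounded by `Y`, the state modulo `nullK k` (seen through
a linear map `q` vanishing there) is `O(Y)`, uniformly in the trajectory. -/
lemma nullK_bound (A : Matrix ι ι ℝ) (B : Matrix ι κ ℝ) (C : Matrix ρ ι ℝ)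
    (D : Matrix ρ κ ℝ) (k : ℕ) :
    ∀ q : EuclideanSpace ℝ ι →ₗ[ℝ] EuclideanSpace ℝ ι,
      (∀ x ∈ nullK A B C D k, q x = 0) →
      ∃ c : ℝ, 0 ≤ c ∧ ∀ (x0 : EuclideanSpace ℝ ι) (a : ℕ → EuclideanSpace ℝ κ) (Y : ℝ),
        (∀ i, ‖outTraj A B C D x0 a i‖ ≤ Y) → ∀ i, ‖q (stateTraj A B x0 a i)‖ ≤ c * Y := by
  induction k with
  | zero =>
    intro q hq
    refine ⟨0, le_rfl, fun x0 a Y _ i => ?_⟩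
    rw [hq _ Submodule.mem_top]
    simp
  | succ k ih =>
    intro q hq
    obtain ⟨q', hq'⟩ := exists_ker_eq (nullK A B C D k)
    obtain ⟨c', hc', h'⟩ := ih q' fun x hx => (hq' x).2 hx
    obtain ⟨c, hc, h⟩ := exists_bound_of_ker_le
      ((q' ∘ₗ (matL A).coprod (matL B)).prod ((matL C).coprod (matL D)))
      (q ∘ₗ LinearMap.fst ℝ _ (EuclideanSpace ℝ κ)) (by
        rintro ⟨x, u⟩ hxu
        have h1 : q' (matL A x + matL B u) = 0 := congrArg Prod.fst hxu
        have h2 : matL C x + matL D u = 0 := congrArg Prod.snd hxu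
        exact hq x ((mem_nullK_succ A B C D k x).2 ⟨u, (hq' _).1 h1, h2⟩))
    refine ⟨c * (c' + 1), by positivity, fun x0 a Y hY i => ?_⟩
    have hY0 : 0 ≤ Y := (norm_nonneg _).trans (hY 0)
    have h1 := h (stateTraj A B x0 a i, a i)
    have h2 := h' x0 a Y hY (i + 1)
    have h3 := hY i
    refine h1.trans ?_
    rw [mul_assoc]
    refine mul_le_mul_of_nonneg_left ?_ hc
    refine max_le (h2.trans (by nlinarith)) (h3.trans (by nlinarith))

/-! ### Summability of the observed modes -/

lemma summable_of_contracting_rec (a b : ℕ → ℝ) (ha : ∀ i, 0 ≤ a i) (hb : ∀ i, 0 ≤ b i)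
    (hbS : Summable b) (t : ℝ) (ht : t < 1)
    (h : ∀ i, a (i + 1) ≤ t * a i + b i) : Summable a := by
  refine summable_of_sum_range_le (c := (a 0 + ∑' i, b i) / (1 - t)) ha fun n => ?_
  rw [le_div_iff₀ (by linarith)]
  have h1 : ∑ i ∈ Finset.range n, a (i + 1) ≤
      t * ∑ i ∈ Finset.range n, a i + ∑ i ∈ Finset.range n, b i := by
    rw [Finset.mul_sum, ← Finset.sum_add_distrib]
    exact Finset.sum_le_sum fun i _ => h i
  have h2 : ∑ i ∈ Finset.range n, b i ≤ ∑' i, b i := hbS.sum_le_tsum _ fun i _ => hb i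
  have h3 := Finset.sum_range_succ' a n
  have h4 := Finset.sum_range_succ a n
  have h5 := ha n
  nlinarith

/-- If `H` kills all generalized eigenspaces of `T` with eigenvalue outside the open unit disc,
then the observed free response `H T^i x` is absolutely summable. -/
lemma summable_observed {X Z : Type*} [AddCommGroup X] [Module ℂ X] [FiniteDimensional ℂ X]
    [NormedAddCommGroup Z] [NormedSpace ℂ Z] (T : Module.End ℂ X) (H : X →ₗ[ℂ] Z)
    (hT : ∀ μ : ℂ, 1 ≤ ‖μ‖ → Module.End.maxGenEigenspace T μ ≤ LinearMap.ker H) (x : X) :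
    Summable fun i => ‖H ((T ^ i) x)‖ := by
  have hx : x ∈ ⨆ μ : ℂ, Module.End.maxGenEigenspace T μ := by
    rw [Module.End.iSup_maxGenEigenspace_eq_top]; trivial
  refine Submodule.iSup_induction _ (motive := fun x => Summable fun i => ‖H ((T ^ i) x)‖) hx
    ?_ ?_ ?_
  · intro μ y hy
    by_cases hμ : 1 ≤ ‖μ‖
    · have h0 : ∀ i, H ((T ^ i) y) = 0 := fun i =>
        hT μ hμ (Module.End.mapsTo_maxGenEigenspace_of_comm
          ((Commute.refl T).pow_right i) μ hy)
      simp [h0]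
    · push Not at hμ
      obtain ⟨k, hk⟩ := (Module.End.mem_maxGenEigenspace T μ y).1 hy
      clear hy
      induction k generalizing y with
      | zero =>
        have : y = 0 := by simpa using hk
        simp [this]
      | succ k ih =>
        have hw := ih ((T - μ • (1 : Module.End ℂ X)) y) (by
          rw [pow_succ] at hk
          exact hk)
        refine summable_of_contracting_rec _ _ (fun _ => norm_nonneg _) (fun _ => norm_nonneg _)
          hw ‖μ‖ hμ fun i => ?_
        have hTy : (T ^ (i + 1)) y = μ • (T ^ i) y + (T ^ i) ((T - μ • (1 : Module.End ℂ X)) y) := by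
          rw [pow_succ, Module.End.mul_apply]
          simp
        rw [hTy, map_add, map_smul, ← norm_smul]
        exact norm_add_le _ _
  · simp
  · intro y z hy hz
    refine Summable.of_nonneg_of_le (fun _ => norm_nonneg _) (fun i => ?_) (hy.add hz)
    rw [map_add, map_add]
    exact norm_add_le _ _

/-- Entrywise embedding of real vectors into complex ones. -/
def complexify (r : ℕ) : EuclideanSpace ℝ (Fin r) →ₗ[ℝ] (Fin r → ℂ) where
  toFun v := fun i => (v i : ℂ)
  map_add' v w := by ext i; simp
  map_smul' c v := by ext i; simp

lemma complexify_matL {d r : ℕ} (H : Matrix (Fin r) (Fin d) ℝ) (x : EuclideanSpace ℝ (Fin d)) :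
    complexify r (matL H x) = Matrix.mulVecLin (H.map (algebraMap ℝ ℂ)) (complexify d x) := by
  ext i
  exact RingHom.map_mulVec (algebraMap ℝ ℂ) H x.ofLp i

lemma matL_pow_succ {d : ℕ} (P : Matrix (Fin d) (Fin d) ℝ) (i : ℕ)
    (x : EuclideanSpace ℝ (Fin d)) : matL (P ^ (i + 1)) x = matL P (matL (P ^ i) x) := by
  rw [pow_succ', matL_mul_apply]

lemma summable_observed_real {d r : ℕ} (P : Matrix (Fin d) (Fin d) ℝ)
    (H : Matrix (Fin r) (Fin d) ℝ)
    (hP : ∀ μ : ℂ, 1 ≤ ‖μ‖ → Module.End.maxGenEigenspace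
      (Matrix.mulVecLin (P.map (algebraMap ℝ ℂ))) μ ≤
        LinearMap.ker (Matrix.mulVecLin (H.map (algebraMap ℝ ℂ))))
    (x : EuclideanSpace ℝ (Fin d)) : Summable fun i => ‖matL H (matL (P ^ i) x)‖ := by
  obtain ⟨c, -, hc⟩ := exists_bound_of_ker_le (complexify r)
    (LinearMap.id : EuclideanSpace ℝ (Fin r) →ₗ[ℝ] _) (by
      intro v hv
      ext i
      have := congrFun hv i
      simpa [complexify] using this)
  refine Summable.of_nonneg_of_le (fun _ => norm_nonneg _) (fun i => hc (matL H (matL (P ^ i) x))) ?_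
  refine Summable.mul_left c ?_
  have h := summable_observed _ _ hP (complexify d x)
  refine h.congr fun i => ?_
  rw [complexify_matL]
  congr 2
  induction i with
  | zero => simp [matL_one_apply]
  | succ i ih => rw [matL_pow_succ, complexify_matL, ← ih, pow_succ', Module.End.mul_apply]

/-- A forced recursion `ζ (k + 1) = Ψ (ζ k) + e k` started at zero, with `Ψ` having absolutely
summable orbits, is bounded by a multiple of the forcing. -/
lemma stable_rec_bound {r : ℕ}
    (Ψ : EuclideanSpace ℝ (Fin r) →ₗ[ℝ] EuclideanSpace ℝ (Fin r))
    (hΨ : ∀ e, Summable fun i => ‖(Ψ ^ i) e‖) :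
    ∃ S : ℝ, 0 ≤ S ∧ ∀ (ζ e : ℕ → EuclideanSpace ℝ (Fin r)) (η : ℝ), ζ 0 = 0 →
      (∀ k, ζ (k + 1) = Ψ (ζ k) + e k) → (∀ k, ‖e k‖ ≤ η) → ∀ k, ‖ζ k‖ ≤ S * η := by
  let b := EuclideanSpace.basisFun (Fin r) ℝ
  let t : ℕ → ℝ := fun i => ∑ j, ‖(Ψ ^ i) (b j)‖
  have ht : Summable t := summable_sum fun j _ => hΨ (b j)
  have ht0 : ∀ i, 0 ≤ t i := fun i => Finset.sum_nonneg fun j _ => norm_nonneg _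
  have hte : ∀ i v, ‖(Ψ ^ i) v‖ ≤ t i * ‖v‖ := by
    intro i v
    have hv : (Ψ ^ i) v = ∑ j, v j • (Ψ ^ i) (b j) := by
      conv_lhs => rw [← b.sum_repr v, map_sum]
      simp [b]
    rw [hv, Finset.sum_mul]
    refine (norm_sum_le _ _).trans (Finset.sum_le_sum fun j _ => ?_)
    rw [norm_smul, mul_comm]
    exact mul_le_mul_of_nonneg_left (PiLp.norm_apply_le v j) (norm_nonneg _)
  refine ⟨∑' i, t i, tsum_nonneg ht0, fun ζ e η h0 hrec he k => ?_⟩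
  have hη : 0 ≤ η := (norm_nonneg _).trans (he 0)
  have hsum : ∀ k, ζ k = ∑ i ∈ Finset.range k, (Ψ ^ i) (e (k - 1 - i)) := by
    intro k
    induction k with
    | zero => simpa using h0
    | succ k ih =>
      rw [hrec, ih, Finset.sum_range_succ', map_sum]
      congr 1
      refine Finset.sum_congr rfl fun i _ => ?_
      rw [pow_succ', Module.End.mul_apply, show k + 1 - 1 - (i + 1) = k - 1 - i by omega]
  rw [hsum k]
  calc _ ≤ ∑ i ∈ Finset.range k, ‖(Ψ ^ i) (e (k - 1 - i))‖ := norm_sum_le _ _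
    _ ≤ ∑ i ∈ Finset.range k, t i * η := Finset.sum_le_sum fun i _ =>
        (hte i _).trans (mul_le_mul_of_nonneg_left (he _) (ht0 i))
    _ = (∑ i ∈ Finset.range k, t i) * η := by rw [Finset.sum_mul]
    _ ≤ _ := mul_le_mul_of_nonneg_right (ht.sum_le_tsum _ fun i _ => ht0 i) hη

/-! ### Detectability when all unstable modes are unobserved -/

/-- The map `Ψ` induced by `P` on the range of `H`, extended to the whole space so that it is
still stable. -/
lemma exists_stable_induced {d r : ℕ} (P : Matrix (Fin d) (Fin d) ℝ)
    (H : Matrix (Fin r) (Fin d) ℝ)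
    (hinv : ∀ ξ, matL H ξ = 0 → matL H (matL P ξ) = 0)
    (hstab : ∀ ξ, Summable fun i => ‖matL H (matL (P ^ i) ξ)‖) :
    ∃ Ψ : EuclideanSpace ℝ (Fin r) →ₗ[ℝ] EuclideanSpace ℝ (Fin r),
      (∀ ξ, Ψ (matL H ξ) = matL H (matL P ξ)) ∧ ∀ e, Summable fun i => ‖(Ψ ^ i) e‖ := by
  obtain ⟨g, hg⟩ := exists_genInverse (matL H)
  obtain ⟨Ψ, hΨ⟩ : ∃ Ψ : EuclideanSpace ℝ (Fin r) →ₗ[ℝ] EuclideanSpace ℝ (Fin r),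
      ∀ e, Ψ e = matL H (matL P (g e)) := ⟨matL H ∘ₗ matL P ∘ₗ g, fun _ => rfl⟩
  have hΨH : ∀ ξ, Ψ (matL H ξ) = matL H (matL P ξ) := by
    intro ξ
    have h := hinv (g (matL H ξ) - ξ) (by rw [map_sub, hg, sub_self])
    rw [map_sub, map_sub, sub_eq_zero] at h
    rw [hΨ, h]
  have hΨpow : ∀ i e, (Ψ ^ (i + 1)) e = matL H (matL (P ^ (i + 1)) (g e)) := by
    intro i e
    induction i with
    | zero => rw [zero_add, pow_one, pow_one, hΨ]
    | succ i ih =>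
      rw [pow_succ', Module.End.mul_apply, ih, hΨH, matL_pow_succ P (i + 1)]
  refine ⟨Ψ, hΨH, fun e => ?_⟩
  have h1 : Summable fun i => ‖matL H (matL (P ^ (i + 1)) (g e))‖ :=
    (hstab (g e)).comp_injective (add_left_injective 1)
  have h2 : Summable fun i => ‖(Ψ ^ (i + 1)) e‖ := h1.congr fun i => by rw [hΨpow]
  exact (summable_nat_add_iff (f := fun i => ‖(Ψ ^ i) e‖) 1).1 h2

/-- A single step that is exactly output-nulling has performance output `(E + F Mh) x`, and this
quantity evolves by `Ψ`. -/
lemma outputNulling_step {n m p r d s : ℕ}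
    (A : Matrix (Fin n) (Fin n) ℝ) (B : Matrix (Fin n) (Fin m) ℝ)
    (C : Matrix (Fin p) (Fin n) ℝ) (D : Matrix (Fin p) (Fin m) ℝ)
    (E : Matrix (Fin r) (Fin n) ℝ) (F : Matrix (Fin r) (Fin m) ℝ)
    (V : Submodule ℝ (EuclideanSpace ℝ (Fin n)))
    (Vst : Matrix (Fin n) (Fin d) ℝ)
    (hVstSpan : LinearMap.range (matL Vst) = V ⊓ ctrlSubspace A B)
    (Mh : Matrix (Fin m) (Fin n) ℝ) (Nh : Matrix (Fin m) (Fin s) ℝ)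
    (hMNh : IsFriend A B C D V Mh Nh)
    (BN : Matrix (Fin d) (Fin s) ℝ) (hBN : B * Nh = Vst * BN)
    (P : Matrix (Fin d) (Fin d) ℝ) (hP : (A + B * Mh) * Vst = Vst * P)
    (hnoti : LinearMap.ker (matL B) ⊓ LinearMap.ker (matL D) ≤ LinearMap.ker (matL F))
    (hFN : F * Nh = 0)
    (H : Matrix (Fin r) (Fin d) ℝ) (hH : (E + F * Mh) * Vst = H)
    (hHB : ∀ w, matL H (matL BN w) = 0)
    (Ψ : EuclideanSpace ℝ (Fin r) →ₗ[ℝ] EuclideanSpace ℝ (Fin r))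
    (hΨH : ∀ ξ, Ψ (matL H ξ) = matL H (matL P ξ))
    (x : EuclideanSpace ℝ (Fin n)) (a : EuclideanSpace ℝ (Fin m))
    (hxV : x ∈ V) (hxC : x ∈ ctrlSubspace A B) (hx' : matL A x + matL B a ∈ V)
    (hy : matL C x + matL D a = 0) :
    matL F (a - matL Mh x) = 0 ∧
      matL (E + F * Mh) (matL A x + matL B a) = Ψ (matL (E + F * Mh) x) := by
  obtain ⟨hM1, hM2, hN1, hN2⟩ := hMNh
  have hEV : ∀ ξ, matL (E + F * Mh) (matL Vst ξ) = matL H ξ := by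
    intro ξ
    rw [← hH, matL_mul_apply]
  obtain ⟨u, rfl⟩ : ∃ u, a = matL Mh x + u := ⟨a - matL Mh x, by abel⟩
  have hAM : matL A x + matL B (matL Mh x + u) = matL (A + B * Mh) x + matL B u := by
    rw [matL_add_apply, matL_mul_apply, map_add]; abel
  have hBu : matL B u ∈ V := by
    rw [hAM] at hx'
    exact (Submodule.add_mem_iff_right V (hM1 x hxV)).1 hx'
  have hDu : matL D u = 0 := by
    have h := hM2 x hxV
    rw [matL_add_apply, matL_mul_apply] at h
    rwa [map_add, ← add_assoc, h, zero_add] at hy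
  obtain ⟨w, hw⟩ : matL B u ∈ LinearMap.range (matL (B * Nh)) := by
    rw [hN2]
    exact ⟨⟨u, hDu, rfl⟩, hBu⟩
  constructor
  · have h1 : u - matL Nh w ∈ LinearMap.ker (matL F) := by
      refine hnoti ⟨?_, ?_⟩
      · simp only [SetLike.mem_coe, LinearMap.mem_ker, map_sub, ← matL_mul_apply, hw, sub_self]
      · have h2 : matL D (matL Nh w) = 0 := hN1 ⟨w, rfl⟩
        simp only [SetLike.mem_coe, LinearMap.mem_ker, map_sub, hDu, h2, sub_self]
    have h3 : matL F (matL Nh w) = 0 := by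
      rw [← matL_mul_apply, hFN]
      simp [matL]
    rw [LinearMap.mem_ker, map_sub, h3, sub_zero] at h1
    rw [add_sub_cancel_left, h1]
  · obtain ⟨ξ, rfl⟩ : x ∈ LinearMap.range (matL Vst) := by
      rw [hVstSpan]; exact ⟨hxV, hxC⟩
    rw [hAM, ← hw, hBN, ← matL_mul_apply, hP, matL_mul_apply, matL_mul_apply, map_add, hEV, hEV,
      hEV, hHB, add_zero, hΨH]

/-- Quantitative version of `outputNulling_step`: along a trajectory with outputs bounded by `Y`,
its two equations hold up to an error `O(Y)`. -/
lemma exists_step_bound {n m p r d s : ℕ}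
    (A : Matrix (Fin n) (Fin n) ℝ) (B : Matrix (Fin n) (Fin m) ℝ)
    (C : Matrix (Fin p) (Fin n) ℝ) (D : Matrix (Fin p) (Fin m) ℝ)
    (E : Matrix (Fin r) (Fin n) ℝ) (F : Matrix (Fin r) (Fin m) ℝ)
    (V : Submodule ℝ (EuclideanSpace ℝ (Fin n)))
    (hV : IsMaxOutputNulling A B C D V)
    (Vst : Matrix (Fin n) (Fin d) ℝ)
    (hVstSpan : LinearMap.range (matL Vst) = V ⊓ ctrlSubspace A B)
    (Mh : Matrix (Fin m) (Fin n) ℝ) (Nh : Matrix (Fin m) (Fin s) ℝ)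
    (hMNh : IsFriend A B C D V Mh Nh)
    (BN : Matrix (Fin d) (Fin s) ℝ) (hBN : B * Nh = Vst * BN)
    (P : Matrix (Fin d) (Fin d) ℝ) (hP : (A + B * Mh) * Vst = Vst * P)
    (hnoti : LinearMap.ker (matL B) ⊓ LinearMap.ker (matL D) ≤ LinearMap.ker (matL F))
    (hFN : F * Nh = 0)
    (H : Matrix (Fin r) (Fin d) ℝ) (hH : (E + F * Mh) * Vst = H)
    (hHB : ∀ w, matL H (matL BN w) = 0)
    (Ψ : EuclideanSpace ℝ (Fin r) →ₗ[ℝ] EuclideanSpace ℝ (Fin r))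
    (hΨH : ∀ ξ, Ψ (matL H ξ) = matL H (matL P ξ)) :
    ∃ K : ℝ, 0 ≤ K ∧ ∀ a Y, (∀ i, ‖outTraj A B C D 0 a i‖ ≤ Y) → ∀ i,
        ‖matL F (a i - matL Mh (stateTraj A B 0 a i))‖ ≤ K * Y ∧
        ‖matL (E + F * Mh) (stateTraj A B 0 a (i + 1)) -
          Ψ (matL (E + F * Mh) (stateTraj A B 0 a i))‖ ≤ K * Y := by
  obtain ⟨q, hq⟩ := exists_ker_eq V
  obtain ⟨q', hq'⟩ := exists_ker_eq (ctrlSubspace A B)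
  obtain ⟨N, hN⟩ := exists_nullK_le A B C D V hV
  obtain ⟨c1, hc1, hqb⟩ := nullK_bound A B C D N q fun x hx => (hq x).2 (hN hx)
  let AB := (matL A).coprod (matL B)
  let fs := LinearMap.fst ℝ (EuclideanSpace ℝ (Fin n)) (EuclideanSpace ℝ (Fin m))
  let sn := LinearMap.snd ℝ (EuclideanSpace ℝ (Fin n)) (EuclideanSpace ℝ (Fin m))
  obtain ⟨c, hc, hcb⟩ := exists_bound_of_ker_le
    ((q ∘ₗ fs).prod ((q' ∘ₗ fs).prod ((q ∘ₗ AB).prod ((matL C).coprod (matL D)))))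
    ((matL F ∘ₗ (sn - matL Mh ∘ₗ fs)).prod
      (matL (E + F * Mh) ∘ₗ AB - Ψ ∘ₗ matL (E + F * Mh) ∘ₗ fs)) (by
      rintro ⟨x, a⟩ h
      have h1 : q x = 0 := congrArg Prod.fst h
      have h2 : q' x = 0 := congrArg (fun z => z.2.1) h
      have h3 : q (matL A x + matL B a) = 0 := congrArg (fun z => z.2.2.1) h
      have h4 : matL C x + matL D a = 0 := congrArg (fun z => z.2.2.2) h
      obtain ⟨h5, h6⟩ := outputNulling_step A B C D E F V Vst hVstSpan Mh Nh hMNh BN hBN P hP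
        hnoti hFN H hH hHB Ψ hΨH x a ((hq x).1 h1) ((hq' x).1 h2) ((hq _).1 h3) h4
      exact Prod.ext h5 (sub_eq_zero.2 h6))
  refine ⟨c * (c1 + 1), by positivity, fun a Y hY i => ?_⟩
  have hY0 : 0 ≤ Y := (norm_nonneg _).trans (hY 0)
  have h1 := hcb (stateTraj A B 0 a i, a i)
  have h2 : ‖((q ∘ₗ fs).prod ((q' ∘ₗ fs).prod ((q ∘ₗ AB).prod
      ((matL C).coprod (matL D))))) (stateTraj A B 0 a i, a i)‖ ≤ (c1 + 1) * Y := by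
    have e1 := hqb 0 a Y hY i
    have e2 : q' (stateTraj A B 0 a i) = 0 := (hq' _).2 (stateTraj_mem_ctrl A B a i)
    have e3 := hqb 0 a Y hY (i + 1)
    have e4 := hY i
    refine max_le (e1.trans (by nlinarith)) (max_le ?_
      (max_le (e3.trans (by nlinarith)) (e4.trans (by nlinarith))))
    change ‖q' (stateTraj A B 0 a i)‖ ≤ _
    rw [e2, norm_zero]
    positivity
  have h3 := h1.trans (mul_le_mul_of_nonneg_left h2 hc)
  rw [← mul_assoc] at h3
  exact ⟨(le_max_left _ _).trans h3, (le_max_right _ _).trans h3⟩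

/-- `‖z‖` is bounded by a multiple of `sup ‖y‖`: by `exists_step_bound`, the sequence
`(E + F Mh) x_k` obeys the stable recursion `Ψ` with a forcing term of size `O(sup ‖y‖)`. -/
lemma detectable_of_stable {n m p r d s : ℕ}
    (A : Matrix (Fin n) (Fin n) ℝ) (B : Matrix (Fin n) (Fin m) ℝ)
    (C : Matrix (Fin p) (Fin n) ℝ) (D : Matrix (Fin p) (Fin m) ℝ)
    (E : Matrix (Fin r) (Fin n) ℝ) (F : Matrix (Fin r) (Fin m) ℝ)
    (V : Submodule ℝ (EuclideanSpace ℝ (Fin n)))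
    (hV : IsMaxOutputNulling A B C D V)
    (Vst : Matrix (Fin n) (Fin d) ℝ)
    (hVstSpan : LinearMap.range (matL Vst) = V ⊓ ctrlSubspace A B)
    (Mh : Matrix (Fin m) (Fin n) ℝ) (Nh : Matrix (Fin m) (Fin s) ℝ)
    (hMNh : IsFriend A B C D V Mh Nh)
    (BN : Matrix (Fin d) (Fin s) ℝ) (hBN : B * Nh = Vst * BN)
    (P : Matrix (Fin d) (Fin d) ℝ) (hP : (A + B * Mh) * Vst = Vst * P)
    (hnoti : LinearMap.ker (matL B) ⊓ LinearMap.ker (matL D) ≤ LinearMap.ker (matL F))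
    (hFN : F * Nh = 0)
    (H : Matrix (Fin r) (Fin d) ℝ) (hH : (E + F * Mh) * Vst = H)
    (hinv : ∀ ξ, matL H ξ = 0 → matL H (matL P ξ) = 0)
    (hHB : ∀ w, matL H (matL BN w) = 0)
    (hstab : ∀ ξ, Summable fun i => ‖matL H (matL (P ^ i) ξ)‖) :
    Detectable A B C D E F := by
  obtain ⟨Ψ, hΨH, hΨs⟩ := exists_stable_induced P H hinv hstab
  obtain ⟨S, hS, hSb⟩ := stable_rec_bound Ψ hΨs
  obtain ⟨K', hK', hstep⟩ := exists_step_bound A B C D E F V hV Vst hVstSpan Mh Nh hMNh BN hBN P hP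
    hnoti hFN H hH hHB Ψ hΨH
  have main : ∀ a Y, (∀ i, ‖outTraj A B C D 0 a i‖ ≤ Y) →
      ∀ k, ‖outTraj A B E F 0 a k‖ ≤ (S + 1) * K' * Y := by
    intro a Y hY k
    have h4 := hSb (fun i => matL (E + F * Mh) (stateTraj A B 0 a i))
      (fun i => matL (E + F * Mh) (stateTraj A B 0 a (i + 1)) -
          Ψ (matL (E + F * Mh) (stateTraj A B 0 a i))) (K' * Y)
      (by simp [stateTraj]) (fun i => by simp) (fun i => (hstep a Y hY i).2) k
    have h5 : outTraj A B E F 0 a k = matL (E + F * Mh) (stateTraj A B 0 a k) +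
        matL F (a k - matL Mh (stateTraj A B 0 a k)) := by
      rw [outTraj, matL_add_apply, matL_mul_apply, map_sub]; abel
    rw [h5]
    refine (norm_add_le _ _).trans ((add_le_add h4 (hstep a Y hY k).1).trans (le_of_eq (by ring)))
  set K := (S + 1) * K' with hK
  have hK0 : 0 ≤ K := by positivity
  refine ⟨1, one_pos, 1 / (K + 1), by positivity, ?_⟩
  rintro a ⟨k, hk⟩
  by_contra! hcon
  have h1 := hk.trans (main a _ (fun i => (hcon i).le) k)
  rw [mul_one_div, le_div_iff₀ (by positivity)] at h1
  linarith

/-! ### Attacks built from an observed unstable mode -/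

/-- States reachable from the origin, in some number of steps, with all outputs bounded by `Y`. -/
inductive QuietReach (A : Matrix ι ι ℝ) (B : Matrix ι κ ℝ) (C : Matrix ρ ι ℝ)
    (D : Matrix ρ κ ℝ) (Y : ℝ) : EuclideanSpace ℝ ι → Prop
  | zero : QuietReach A B C D Y 0
  | step (x : EuclideanSpace ℝ ι) (u : EuclideanSpace ℝ κ) : QuietReach A B C D Y x →
      ‖matL C x + matL D u‖ ≤ Y → QuietReach A B C D Y (matL A x + matL B u)

lemma outTraj_congr (A : Matrix ι ι ℝ) (B : Matrix ι κ ℝ) (C : Matrix ρ ι ℝ)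
    (D : Matrix ρ κ ℝ) (x0 : EuclideanSpace ℝ ι)
    {a b : ℕ → EuclideanSpace ℝ κ} (k : ℕ) (h : ∀ i ≤ k, a i = b i) :
    outTraj A B C D x0 a k = outTraj A B C D x0 b k := by
  rw [outTraj, outTraj, stateTraj_congr A B x0 k fun i hi => h i hi.le, h k le_rfl]

lemma QuietReach.exists_input {A : Matrix ι ι ℝ} {B : Matrix ι κ ℝ} {C : Matrix ρ ι ℝ}
    {D : Matrix ρ κ ℝ} {Y : ℝ} {x : EuclideanSpace ℝ ι} (hx : QuietReach A B C D Y x) :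
    ∃ a k, stateTraj A B 0 a k = x ∧ ∀ i < k, ‖outTraj A B C D 0 a i‖ ≤ Y := by
  induction hx with
  | zero => exact ⟨0, 0, rfl, fun i hi => absurd hi (by omega)⟩
  | step x u _ hy ih =>
    obtain ⟨a, k, rfl, ha⟩ := ih
    have hs : stateTraj A B 0 (Function.update a k u) k = stateTraj A B 0 a k :=
      stateTraj_congr A B 0 k fun i hi => Function.update_of_ne (by omega) _ _
    refine ⟨Function.update a k u, k + 1, ?_, fun i hi => ?_⟩
    · simp only [stateTraj, hs, Function.update_self]
    · rcases Nat.lt_succ_iff_lt_or_eq.1 hi with hi | rfl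
      · rw [outTraj_congr A B C D 0 (b := a) i fun l hl => Function.update_of_ne (by omega) _ _]
        exact ha i hi
      · simpa only [outTraj, hs, Function.update_self] using hy

/-- Superposing an input `b` on the output-nulling feedback moves `Vst χ` to
`Vst (P ^ N χ)` plus the state that `b` reaches from the origin, at the output cost of `b`. -/
lemma QuietReach.inject {n m p d : ℕ}
    {A : Matrix (Fin n) (Fin n) ℝ} {B : Matrix (Fin n) (Fin m) ℝ}
    {C : Matrix (Fin p) (Fin n) ℝ} {D : Matrix (Fin p) (Fin m) ℝ}
    {Vst : Matrix (Fin n) (Fin d) ℝ} {Mh : Matrix (Fin m) (Fin n) ℝ}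
    {P : Matrix (Fin d) (Fin d) ℝ} (hP : (A + B * Mh) * Vst = Vst * P)
    (hCV : ∀ ξ, matL (C + D * Mh) (matL Vst ξ) = 0) {Y : ℝ}
    {χ : EuclideanSpace ℝ (Fin d)} (hχ : QuietReach A B C D Y (matL Vst χ))
    (b : ℕ → EuclideanSpace ℝ (Fin m)) (N : ℕ) (hb : ∀ i < N, ‖outTraj A B C D 0 b i‖ ≤ Y) :
    QuietReach A B C D Y (matL Vst (matL (P ^ N) χ) + stateTraj A B 0 b N) := by
  induction N with
  | zero => simpa [stateTraj, matL_one_apply] using hχ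
  | succ N ih =>
    have h := QuietReach.step _ (matL Mh (matL Vst (matL (P ^ N) χ)) + b N)
      (ih fun i hi => hb i (by omega)) (by
        have h1 := hCV (matL (P ^ N) χ)
        rw [matL_add_apply, matL_mul_apply] at h1
        have h2 := hb N (by omega)
        rw [outTraj] at h2
        rw [map_add, map_add, add_add_add_comm, h1, zero_add]
        exact h2)
    have h3 : matL Vst (matL (P ^ (N + 1)) χ) + stateTraj A B 0 b (N + 1) =
        matL A (matL Vst (matL (P ^ N) χ) + stateTraj A B 0 b N) +
          matL B (matL Mh (matL Vst (matL (P ^ N) χ)) + b N) := by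
      rw [matL_pow_succ, ← matL_mul_apply Vst P, ← hP, matL_mul_apply, matL_add_apply,
        matL_mul_apply, stateTraj, map_add, map_add]
      abel
    rw [h3]
    exact h

/-- After reaching `Vst χ` quietly, the output-nulling feedback keeps the output at zero forever,
while the performance output at the switching time is `(E + F Mh) Vst χ`. -/
lemma QuietReach.exists_attack {n m p r d : ℕ}
    {A : Matrix (Fin n) (Fin n) ℝ} {B : Matrix (Fin n) (Fin m) ℝ}
    {C : Matrix (Fin p) (Fin n) ℝ} {D : Matrix (Fin p) (Fin m) ℝ}
    (E : Matrix (Fin r) (Fin n) ℝ) (F : Matrix (Fin r) (Fin m) ℝ)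
    {Vst : Matrix (Fin n) (Fin d) ℝ} {Mh : Matrix (Fin m) (Fin n) ℝ}
    {P : Matrix (Fin d) (Fin d) ℝ} (hP : (A + B * Mh) * Vst = Vst * P)
    (hCV : ∀ ξ, matL (C + D * Mh) (matL Vst ξ) = 0) {Y : ℝ} (hY : 0 ≤ Y)
    {χ : EuclideanSpace ℝ (Fin d)} (hχ : QuietReach A B C D Y (matL Vst χ)) :
    ∃ a k, outTraj A B E F 0 a k = matL ((E + F * Mh) * Vst) χ ∧
      ∀ i, ‖outTraj A B C D 0 a i‖ ≤ Y := by
  obtain ⟨a, k, hak, ha⟩ := hχ.exists_input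
  let a' : ℕ → EuclideanSpace ℝ (Fin m) := fun i =>
    if i < k then a i else matL Mh (matL Vst (matL (P ^ (i - k)) χ))
  have ha' : ∀ j, a' (k + j) = matL Mh (matL Vst (matL (P ^ j) χ)) := fun j => by simp [a']
  have hst : ∀ j, stateTraj A B 0 a' (k + j) = matL Vst (matL (P ^ j) χ) := by
    intro j
    induction j with
    | zero =>
      rw [add_zero, stateTraj_congr A B 0 (b := a) k fun i hi => by simp [a', hi], hak, pow_zero,
        matL_one_apply]
    | succ j ih =>
      rw [← add_assoc, stateTraj, ih, ha', matL_pow_succ, ← matL_mul_apply Vst P, ← hP,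
        matL_mul_apply, matL_add_apply, matL_mul_apply]
  refine ⟨a', k, ?_, fun i => ?_⟩
  · have h1 := hst 0
    have h2 := ha' 0
    rw [add_zero, pow_zero, matL_one_apply] at h1 h2
    rw [outTraj, h1, h2, matL_mul_apply, matL_add_apply, matL_mul_apply]
  · rcases lt_or_ge i k with hi | hi
    · rw [outTraj_congr A B C D 0 (b := a) i fun l hl => by simp [a', lt_of_le_of_lt hl hi]]
      exact ha i hi
    · obtain ⟨j, rfl⟩ := Nat.exists_eq_add_of_le hi
      have h1 := hCV (matL (P ^ j) χ)
      rw [matL_add_apply, matL_mul_apply] at h1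
      rw [outTraj, hst, ha', h1, norm_zero]
      exact hY

/-- Entrywise real part, as a real-linear map. -/
def reVec (r : ℕ) : (Fin r → ℂ) →ₗ[ℝ] EuclideanSpace ℝ (Fin r) where
  toFun v := WithLp.toLp 2 fun i => (v i).re
  map_add' v w := by ext i; simp
  map_smul' c v := by ext i; simp

lemma reVec_mulVecLin {d r : ℕ} (H : Matrix (Fin r) (Fin d) ℝ) (v : Fin d → ℂ) :
    reVec r (Matrix.mulVecLin (H.map (algebraMap ℝ ℂ)) v) = matL H (reVec d v) := by
  ext i
  simp [reVec, matL_apply, Matrix.mulVec, dotProduct]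

lemma reVec_smul {r : ℕ} (μ : ℂ) (v : Fin r → ℂ) :
    reVec r (μ • v) = μ.re • reVec r v + μ.im • reVec r (Complex.I • v) := by
  ext i
  simp [reVec, sub_eq_add_neg]

lemma exists_reVec_ne_zero {r : ℕ} {z : Fin r → ℂ} (hz : z ≠ 0) :
    ∃ μ : ℂ, ‖μ‖ ≤ 1 ∧ reVec r (μ • z) ≠ 0 := by
  by_contra! hcon
  refine hz (funext fun i => ?_)
  have h1 := congrArg (fun w => w.ofLp i) (hcon 1 (by simp))
  have h2 := congrArg (fun w => w.ofLp i) (hcon Complex.I (by simp))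
  apply Complex.ext
  · simpa [reVec] using h1
  · simpa [reVec] using h2

/-- If `H` does not vanish on a generalized eigenspace of `T`, some vector outside `ker H` is an
eigenvector of `T` modulo `ker H`. -/
lemma exists_eigen_mod_ker {X Z : Type*} [AddCommGroup X] [Module ℂ X] [AddCommGroup Z]
    [Module ℂ Z] (T : Module.End ℂ X) (H : X →ₗ[ℂ] Z) (μ : ℂ)
    (h : ¬ Module.End.maxGenEigenspace T μ ≤ LinearMap.ker H) :
    ∃ v, H v ≠ 0 ∧ H (T v) = μ • H v := by
  obtain ⟨w, hw, hHw⟩ := SetLike.not_le_iff_exists.1 h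
  obtain ⟨k, hk⟩ := (Module.End.mem_maxGenEigenspace T μ w).1 hw
  clear hw
  induction k generalizing w with
  | zero =>
    have : w = 0 := by simpa using hk
    exact absurd (by simp [this]) hHw
  | succ k ih =>
    by_cases h0 : H ((T - μ • (1 : Module.End ℂ X)) w) = 0
    · refine ⟨w, hHw, ?_⟩
      rw [← sub_eq_zero]
      simpa using h0
    · exact ih _ h0 (by rw [pow_succ] at hk; exact hk)

/-- With `v` an eigenvector of `P` modulo `ker H` for an eigenvalue `lam` of modulus at least `1`,
vectors `Re (μ v)` with `‖μ‖ ≤ 1` are injected every `n` steps at a fixed output cost. Choosing the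
`μ`'s as successive powers of `lam ^ (-n)`, which stay in the unit disc, makes all contributions to
the performance output equal at the final time, so that it grows linearly in their number. -/
lemma not_detectable_of_unstable {n m p r d : ℕ}
    (A : Matrix (Fin n) (Fin n) ℝ) (B : Matrix (Fin n) (Fin m) ℝ)
    (C : Matrix (Fin p) (Fin n) ℝ) (D : Matrix (Fin p) (Fin m) ℝ)
    (E : Matrix (Fin r) (Fin n) ℝ) (F : Matrix (Fin r) (Fin m) ℝ)
    (Vst : Matrix (Fin n) (Fin d) ℝ)
    (hVstC : ∀ ξ, matL Vst ξ ∈ ctrlSubspace A B)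
    (Mh : Matrix (Fin m) (Fin n) ℝ)
    (hCV : ∀ ξ, matL (C + D * Mh) (matL Vst ξ) = 0)
    (P : Matrix (Fin d) (Fin d) ℝ) (hP : (A + B * Mh) * Vst = Vst * P)
    (H : Matrix (Fin r) (Fin d) ℝ) (hH : (E + F * Mh) * Vst = H)
    (hinv : ∀ ξ, matL H ξ = 0 → matL H (matL P ξ) = 0)
    (lam : ℂ) (hlam : 1 ≤ ‖lam‖)
    (hnot : ¬ (Module.End.maxGenEigenspace (Matrix.mulVecLin (P.map (algebraMap ℝ ℂ))) lam ≤
      LinearMap.ker (Matrix.mulVecLin (H.map (algebraMap ℝ ℂ))))) :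
    ¬ Detectable A B C D E F := by
  set T : Module.End ℂ (Fin d → ℂ) := Matrix.mulVecLin (P.map (algebraMap ℝ ℂ)) with hT
  set Hc := Matrix.mulVecLin (H.map (algebraMap ℝ ℂ)) with hHc
  obtain ⟨v, hv0, hv1⟩ := exists_eigen_mod_ker T Hc lam hnot
  have hlam0 : lam ≠ 0 := by
    rintro rfl
    norm_num at hlam
  have hHre : ∀ w, reVec r (Hc w) = matL H (reVec d w) := reVec_mulVecLin H
  have hTre : ∀ w, reVec d (T w) = matL P (reVec d w) := reVec_mulVecLin P
  have hinvc : ∀ w, Hc w = 0 → Hc (T w) = 0 := by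
    intro w hw
    by_contra hne
    obtain ⟨μ, -, hμ⟩ := exists_reVec_ne_zero hne
    apply hμ
    rw [← map_smul, ← map_smul, hHre, hTre]
    apply hinv
    rw [← hHre, map_smul, hw, smul_zero, map_zero]
  have hpow : ∀ i, Hc ((T ^ i) v) = lam ^ i • Hc v := by
    intro i
    -- `T ^ i v - lam ^ i • v` stays in `ker Hc`.
    have h : Hc ((T ^ i) v - lam ^ i • v) = 0 := by
      induction i with
      | zero => simp
      | succ i ih =>
        have h1 := hinvc _ ih
        rw [map_sub, map_sub, sub_eq_zero, map_smul, map_smul, hv1] at h1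
        rw [pow_succ', Module.End.mul_apply, map_sub, h1, map_smul, smul_smul, pow_succ, sub_self]
    rwa [map_sub, map_smul, sub_eq_zero] at h
  have hPow : ∀ (i : ℕ) (μ : ℂ),
      matL H (matL (P ^ i) (reVec d (μ • v))) = reVec r ((μ * lam ^ i) • Hc v) := by
    intro i μ
    have h1 : ∀ w, matL (P ^ i) (reVec d w) = reVec d ((T ^ i) w) := by
      intro w
      induction i with
      | zero => simp [matL_one_apply]
      | succ i ih => rw [matL_pow_succ, ih, ← hTre, pow_succ', Module.End.mul_apply]
    rw [h1, ← hHre, map_smul, map_smul, hpow, smul_smul]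
  rintro ⟨δ, hδ, ε, hε, hdet⟩
  -- Inputs steering the origin to the real and imaginary directions in `n` steps.
  obtain ⟨b1, hb1⟩ := exists_input_of_mem_reachK A B n _
    (ctrl_le_reachK A B (hVstC (reVec d v)))
  obtain ⟨b2, hb2⟩ := exists_input_of_mem_reachK A B n _
    (ctrl_le_reachK A B (hVstC (reVec d (Complex.I • v))))
  set G := ∑ i ∈ Finset.range n, (‖outTraj A B C D 0 b1 i‖ + ‖outTraj A B C D 0 b2 i‖) with hG
  have hG0 : 0 ≤ G := by positivity
  set Y := ε / 2 with hYdef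
  have hY0 : 0 < Y := by positivity
  set s := Y / (G + 1) with hs
  have hs0 : 0 < s := by positivity
  have hsG : s * G ≤ Y := by
    rw [hs, div_mul_eq_mul_div, div_le_iff₀ (by positivity)]
    nlinarith
  -- `T'` successive injections whose phases are aligned at the final time.
  have hacc : ∀ (T' : ℕ) (μ : ℂ), ‖μ‖ ≤ 1 → ∃ χ, QuietReach A B C D Y (matL Vst χ) ∧
      ∀ i, matL H (matL (P ^ i) χ) = (T' * s : ℝ) • reVec r ((μ * lam ^ i) • Hc v) := by
    intro T'
    induction T' with
    | zero =>
      intro μ _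
      refine ⟨0, ?_, fun i => by simp⟩
      rw [map_zero]
      exact QuietReach.zero
    | succ T' ih =>
      intro μ hμ
      obtain ⟨χ, hχ, hχH⟩ := ih (μ * (lam ^ n)⁻¹) (by
        rw [norm_mul, norm_inv, norm_pow]
        exact mul_le_one₀ hμ (by positivity) (inv_le_one_of_one_le₀ (one_le_pow₀ hlam)))
      have hre : |μ.re| ≤ 1 := (Complex.abs_re_le_norm μ).trans hμ
      have him : |μ.im| ≤ 1 := (Complex.abs_im_le_norm μ).trans hμ
      have h1 := hχ.inject hP hCV (fun i => (s * μ.re) • b1 i + (s * μ.im) • b2 i) n (by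
        intro i hi
        rw [outTraj_comb]
        have e1 : ‖outTraj A B C D 0 b1 i‖ + ‖outTraj A B C D 0 b2 i‖ ≤ G :=
          Finset.single_le_sum
            (f := fun i => ‖outTraj A B C D 0 b1 i‖ + ‖outTraj A B C D 0 b2 i‖)
            (fun j _ => by positivity) (Finset.mem_range.2 hi)
        refine (norm_add_le _ _).trans ?_
        rw [norm_smul, norm_smul, norm_mul, norm_mul, Real.norm_eq_abs, Real.norm_eq_abs,
          Real.norm_eq_abs, abs_of_pos hs0]
        have e2 : s * |μ.re| * ‖outTraj A B C D 0 b1 i‖ ≤ s * ‖outTraj A B C D 0 b1 i‖ :=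
          mul_le_mul_of_nonneg_right (by nlinarith) (norm_nonneg _)
        have e3 : s * |μ.im| * ‖outTraj A B C D 0 b2 i‖ ≤ s * ‖outTraj A B C D 0 b2 i‖ :=
          mul_le_mul_of_nonneg_right (by nlinarith) (norm_nonneg _)
        nlinarith)
      refine ⟨matL (P ^ n) χ + s • reVec d (μ • v), ?_, fun i => ?_⟩
      · rw [stateTraj_comb, hb1, hb2] at h1
        rw [map_add, map_smul, reVec_smul, map_add, map_smul, map_smul, smul_add, smul_smul,
          smul_smul]
        exact h1
      · rw [map_add, map_add, map_smul, map_smul, hPow, ← matL_mul_apply (P ^ i), ← pow_add, hχH,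
          pow_add, mul_comm (lam ^ i), ← mul_assoc, inv_mul_cancel_right₀ (pow_ne_zero n hlam0),
          ← add_smul]
        congr 1
        push_cast
        ring
  obtain ⟨μ, hμ, hμ0⟩ := exists_reVec_ne_zero hv0
  obtain ⟨T', hT'⟩ := exists_nat_ge (δ / (s * ‖reVec r (μ • Hc v)‖))
  obtain ⟨χ, hχ, hχH⟩ := hacc T' μ hμ
  obtain ⟨a, k, hak, ha⟩ := hχ.exists_attack E F hP hCV hY0.le
  have hz : δ ≤ ‖outTraj A B E F 0 a k‖ := by
    have h0 := hχH 0
    rw [pow_zero, matL_one_apply, pow_zero, mul_one] at h0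
    rw [hak, hH, h0, norm_smul, Real.norm_eq_abs, abs_of_nonneg (by positivity)]
    rw [div_le_iff₀ (mul_pos hs0 (norm_pos_iff.2 hμ0))] at hT'
    linarith
  obtain ⟨ky, hky⟩ := hdet a ⟨k, hz⟩
  have := ha ky
  linarith

/-- Remark 3 of the paper: when `ker((E+FM̂)V*)` equals the controllable
subspace of `((A+BM̂)|_{V*}, B̂_N)` and conditions (i), (ii) of Theorem 1 fail,
vulnerability is equivalent to `(A+BM̂)|_{V*}` having an unstable eigenvalue
whose generalized eigenspace is not contained in `ker((E+FM̂)V*)`. -/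
theorem vulnerability_controllable_kernel_case {n m p r d s : ℕ}
    (A : Matrix (Fin n) (Fin n) ℝ) (B : Matrix (Fin n) (Fin m) ℝ)
    (C : Matrix (Fin p) (Fin n) ℝ) (D : Matrix (Fin p) (Fin m) ℝ)
    (E : Matrix (Fin r) (Fin n) ℝ) (F : Matrix (Fin r) (Fin m) ℝ)
    (V : Submodule ℝ (EuclideanSpace ℝ (Fin n)))
    (hV : IsMaxOutputNulling A B C D V) (hVne : V ≠ ⊥)
    (Vst : Matrix (Fin n) (Fin d) ℝ)
    (hVstSpan : LinearMap.range (matL Vst) = V ⊓ ctrlSubspace A B)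
    (hVstInj : LinearMap.ker (matL Vst) = ⊥)
    (Mh : Matrix (Fin m) (Fin n) ℝ) (Nh : Matrix (Fin m) (Fin s) ℝ)
    (hMNh : IsFriend A B C D V Mh Nh)
    (BN : Matrix (Fin d) (Fin s) ℝ) (hBN : B * Nh = Vst * BN)
    (Φh : Matrix (Fin d) (Fin d) ℝ) (hΦh : (A + B * Mh) * Vst = Vst * Φh)
    (hnoti : LinearMap.ker (matL B) ⊓ LinearMap.ker (matL D) ≤
      LinearMap.ker (matL F))
    (hnotii : ¬ ∃ (s' : ℕ) (M : Matrix (Fin m) (Fin n) ℝ)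
        (N : Matrix (Fin m) (Fin s') ℝ),
      IsFriend A B C D V M N ∧
      (F * N ≠ 0 ∨
        ∃ j : ℕ, j < n ∧ (E + F * M) * (A + B * M) ^ j * (B * N) ≠ 0))
    (hker : LinearMap.ker (matL ((E + F * Mh) * Vst)) =
      ⨆ j : Fin d, LinearMap.range (matL (Φh ^ (j : ℕ) * BN))) :
    ¬ Detectable A B C D E F ↔
      ∃ lam : ℂ, 1 ≤ ‖lam‖ ∧
        ¬ (Module.End.maxGenEigenspace
              (Matrix.mulVecLin (Φh.map (algebraMap ℝ ℂ))) lam ≤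
            LinearMap.ker
              (Matrix.mulVecLin (((E + F * Mh) * Vst).map (algebraMap ℝ ℂ)))) := by
  have hinv : ∀ ξ, matL ((E + F * Mh) * Vst) ξ = 0 →
      matL ((E + F * Mh) * Vst) (matL Φh ξ) = 0 := by
    intro ξ hξ
    have h1 : ξ ∈ ctrlSubspace Φh BN := hker.le hξ
    exact hker.ge (ctrl_invariant Φh BN h1)
  constructor
  · intro hnd
    by_contra! hcon
    have hFN : F * Nh = 0 := by
      by_contra hne
      exact hnotii ⟨s, Mh, Nh, hMNh, Or.inl hne⟩
    exact hnd (detectable_of_stable A B C D E F V hV Vst hVstSpan Mh Nh hMNh BN hBN Φh hΦh hnoti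
      hFN _ rfl hinv (fun w => hker.ge (input_mem_ctrl Φh BN w))
      (summable_observed_real Φh _ hcon))
  · rintro ⟨lam, hlam, hnot⟩
    have hmem : ∀ ξ, matL Vst ξ ∈ V ⊓ ctrlSubspace A B := fun ξ => hVstSpan.le ⟨ξ, rfl⟩
    exact not_detectable_of_unstable A B C D E F Vst (fun ξ => (hmem ξ).2) Mh
      (fun ξ => hMNh.2.1 _ (hmem ξ).1) Φh hΦh _ rfl hinv lam hlam hnot
end
end

section
/- Suppose the noiseless system (with w ≡ 0) is detectable and A is Schur stable (every eigenvalue λ ∈ ℂ of A satisfies |λ| < 1). Then there exist δ > 0 and ε > 0 such that: (i) no false alarm: for every noise sequence w with ‖w_k‖ ≤ 1 for all k, ‖y_k(0, 0, w)‖ < ε for all k ∈ ℕ; and (ii) severe attacks are detected: for every attack sequence a and every noise sequence w with ‖w_k‖ ≤ 1 for all k, if ‖z_{k_z}(0, a, w)‖ ≥ δ for some k_z, then ‖y_{k_y}(0, a, w)‖ ≥ ε for some k_y. -/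
/-!
The trajectories are linear in the pair (attack, noise), so a noisy output is the sum of the
noiseless output and the response to the noise alone (`outTrajW_split`).

Schur stability says that the complexification of `A` has spectral radius `< 1`; Gelfand's formula
then makes the norms of its powers summable (`summable_norm_pow_of_spectrum_lt_one`), and the same
majorant serves for the powers of the real operator (`exists_summable_pow_bound`). Since the state
response to noise is the convolution `∑ A ^ (k - 1 - i) B_w w_i`, every output response to noise in
the unit ball is bounded by a constant uniform in time and noise (`exists_noise_bound`): say `My`
for `y` and `Mz` for `z`.

Noiseless detectability with thresholds `(δ₀, ε₀)` is homogeneous: it holds with `(t δ₀, t ε₀)` for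
all `t > 0`. Taking `t ε₀ = 2 My + 1`, `ε = My + 1`, `δ = t δ₀ + Mz`, the noise can neither
trigger an alarm nor hide a severe attack, by two uses of the triangle inequality.
-/

open Matrix

noncomputable section

variable {ι κ ρ σ : Type*} [Fintype ι] [DecidableEq ι] [Fintype κ] [DecidableEq κ]
  [Fintype ρ] [DecidableEq ρ] [Fintype σ] [DecidableEq σ]

variable {ω : Type*} [Fintype ω] [DecidableEq ω]

/-- State trajectory of `x_{k+1} = A x_k + B a_k + B_w w_k` from initial state
`x0`, attack input `a`, and noise `w`. -/
def stateTrajW (A : Matrix ι ι ℝ) (B : Matrix ι κ ℝ) (Bw : Matrix ι ω ℝ)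
    (x0 : EuclideanSpace ℝ ι) (a : ℕ → EuclideanSpace ℝ κ)
    (w : ℕ → EuclideanSpace ℝ ω) : ℕ → EuclideanSpace ℝ ι
  | 0 => x0
  | k + 1 => matL A (stateTrajW A B Bw x0 a w k) + matL B (a k) + matL Bw (w k)

/-- Output trajectory `y_k = C x_k + D a_k + D_w w_k` of the noisy system. -/
def outTrajW (A : Matrix ι ι ℝ) (B : Matrix ι κ ℝ) (Bw : Matrix ι ω ℝ)
    (C : Matrix ρ ι ℝ) (D : Matrix ρ κ ℝ) (Dw : Matrix ρ ω ℝ)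
    (x0 : EuclideanSpace ℝ ι) (a : ℕ → EuclideanSpace ℝ κ)
    (w : ℕ → EuclideanSpace ℝ ω) (k : ℕ) : EuclideanSpace ℝ ρ :=
  matL C (stateTrajW A B Bw x0 a w k) + matL D (a k) + matL Dw (w k)

open Filter Topology ENNReal

/-- Gelfand's formula turns a spectrum inside the open unit disc into geometric decay of powers. -/
theorem summable_norm_pow_of_spectrum_lt_one {R : Type*} [NormedRing R] [NormedAlgebra ℂ R]
    [CompleteSpace R] (a : R) (h : ∀ z ∈ spectrum ℂ a, ‖z‖ < 1) :
    Summable fun k : ℕ => ‖a ^ k‖ := by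
  have hr : spectralRadius ℂ a < 1 := by
    -- The spectrum is empty when the algebra is trivial (state dimension zero).
    rcases (spectrum ℂ a).eq_empty_or_nonempty with he | hne
    · simp [spectralRadius, he]
    · exact_mod_cast spectrum.spectralRadius_lt_of_forall_lt_of_nonempty (r := 1) hne
        (fun z hz => by exact_mod_cast h z hz)
  obtain ⟨ρ, hρ, hρ1⟩ := ENNReal.lt_iff_exists_nnreal_btwn.1 hr
  have hρ1' : ρ < 1 := by exact_mod_cast hρ1
  have hev := (spectrum.pow_nnnorm_pow_one_div_tendsto_nhds_spectralRadius a).eventually_lt_const hρ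
  have hgeo : Summable fun k : ℕ => (ρ : ℝ) ^ k :=
    summable_geometric_of_lt_one ρ.2 (by exact_mod_cast hρ1')
  refine Summable.of_norm_bounded_eventually_nat hgeo ?_
  filter_upwards [hev, eventually_gt_atTop 0] with k hk hk0
  have hk0' : (0 : ℝ) < k := by exact_mod_cast hk0
  have h1 : (‖a ^ k‖₊ : ℝ≥0∞) ≤ (ρ : ℝ≥0∞) ^ k := by
    have h2 := ENNReal.rpow_le_rpow hk.le hk0'.le
    rw [← ENNReal.rpow_mul, one_div, inv_mul_cancel₀ hk0'.ne', ENNReal.rpow_one,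
      ENNReal.rpow_natCast] at h2
    exact h2
  have h3 : ‖a ^ k‖₊ ≤ ρ ^ k := by exact_mod_cast h1
  rw [norm_norm]
  exact_mod_cast h3

/-- Coordinatewise embedding of real Euclidean space into the complex one. -/
def complexifyVec {n : ℕ} (x : EuclideanSpace ℝ (Fin n)) : EuclideanSpace ℂ (Fin n) :=
  WithLp.toLp 2 fun i => (x i : ℂ)

theorem norm_complexifyVec {n : ℕ} (x : EuclideanSpace ℝ (Fin n)) :
    ‖complexifyVec x‖ = ‖x‖ := by
  simp [complexifyVec, EuclideanSpace.norm_eq]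

theorem complexifyVec_matL {n : ℕ} (A : Matrix (Fin n) (Fin n) ℝ)
    (x : EuclideanSpace ℝ (Fin n)) :
    complexifyVec (matL A x) =
      Matrix.toEuclideanCLM (n := Fin n) (𝕜 := ℂ) (A.map (algebraMap ℝ ℂ)) (complexifyVec x) := by
  ext i
  simp [complexifyVec, matL, Matrix.toLpLin_apply, Matrix.mulVec, dotProduct]

/-- For Schur stable `A`, the powers of the real operator have a summable sequence of norm bounds,
namely the operator norms of the powers of the complexification. -/
theorem exists_summable_pow_bound {n : ℕ} (A : Matrix (Fin n) (Fin n) ℝ)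
    (hstable : ∀ lam : ℂ,
      Module.End.HasEigenvalue
        (Matrix.mulVecLin (A.map (algebraMap ℝ ℂ))) lam → ‖lam‖ < 1) :
    ∃ c : ℕ → ℝ, Summable c ∧ (∀ j, 0 ≤ c j) ∧
      ∀ (j : ℕ) (x : EuclideanSpace ℝ (Fin n)), ‖(matL A ^ j) x‖ ≤ c j * ‖x‖ := by
  set T := Matrix.toEuclideanCLM (n := Fin n) (𝕜 := ℂ) (A.map (algebraMap ℝ ℂ)) with hT
  refine ⟨fun j => ‖T ^ j‖, ?_, fun j => norm_nonneg _, fun j x => ?_⟩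
  · refine summable_norm_pow_of_spectrum_lt_one T fun z hz => hstable z ?_
    rw [Module.End.hasEigenvalue_iff_mem_spectrum, ← Matrix.toLin'_apply', Matrix.spectrum_toLin']
    rwa [hT, AlgEquiv.spectrum_eq] at hz
  · have h : complexifyVec ((matL A ^ j) x) = (T ^ j) (complexifyVec x) := by
      induction j with
      | zero => simp
      | succ j ih =>
        rw [pow_succ', pow_succ', Module.End.mul_apply, complexifyVec_matL, ih]
        rfl
    rw [← norm_complexifyVec, h, ← norm_complexifyVec x]
    exact (T ^ j).le_opNorm _

section Trajectories

variable {n m p q : ℕ} (A : Matrix (Fin n) (Fin n) ℝ) (B : Matrix (Fin n) (Fin m) ℝ)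
  (Bw : Matrix (Fin n) (Fin q) ℝ) (C : Matrix (Fin p) (Fin n) ℝ) (D : Matrix (Fin p) (Fin m) ℝ)
  (Dw : Matrix (Fin p) (Fin q) ℝ)

theorem stateTrajW_split (a : ℕ → EuclideanSpace ℝ (Fin m)) (w : ℕ → EuclideanSpace ℝ (Fin q))
    (k : ℕ) : stateTrajW A B Bw 0 a w k =
      stateTrajW A B Bw 0 a 0 k + stateTrajW A B Bw 0 0 w k := by
  induction k with
  | zero => simp [stateTrajW]
  | succ k ih =>
    simp only [stateTrajW, ih, map_add, Pi.zero_apply, map_zero]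
    abel

theorem outTrajW_split (a : ℕ → EuclideanSpace ℝ (Fin m)) (w : ℕ → EuclideanSpace ℝ (Fin q))
    (k : ℕ) : outTrajW A B Bw C D Dw 0 a w k =
      outTrajW A B Bw C D Dw 0 a 0 k + outTrajW A B Bw C D Dw 0 0 w k := by
  simp only [outTrajW, stateTrajW_split A B Bw a w k, map_add, Pi.zero_apply, map_zero]
  abel

theorem stateTrajW_smul (s : ℝ) (a : ℕ → EuclideanSpace ℝ (Fin m)) (k : ℕ) :
    stateTrajW A B Bw 0 (s • a) 0 k = s • stateTrajW A B Bw 0 a 0 k := by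
  induction k with
  | zero => simp [stateTrajW]
  | succ k ih => simp [stateTrajW, ih]

theorem outTrajW_smul (s : ℝ) (a : ℕ → EuclideanSpace ℝ (Fin m)) (k : ℕ) :
    outTrajW A B Bw C D Dw 0 (s • a) 0 k = s • outTrajW A B Bw C D Dw 0 a 0 k := by
  simp [outTrajW, stateTrajW_smul]

/-- Variation of constants. The truncated subtraction is harmless, as `i < k` in the sum. -/
theorem stateTrajW_noise_eq_sum (w : ℕ → EuclideanSpace ℝ (Fin q)) (k : ℕ) :
    stateTrajW A B Bw 0 0 w k =
      ∑ i ∈ Finset.range k, (matL A ^ (k - 1 - i)) (matL Bw (w i)) := by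
  induction k with
  | zero => simp [stateTrajW]
  | succ k ih =>
    rw [Finset.sum_range_succ, stateTrajW, ih, map_sum]
    simp only [Pi.zero_apply, map_zero, add_zero, Nat.add_sub_cancel, Nat.sub_self, pow_zero,
      Module.End.one_apply]
    congr 1
    refine Finset.sum_congr rfl fun i hi => ?_
    have hik : k - i = (k - 1 - i) + 1 := by
      have := Finset.mem_range.1 hi
      omega
    rw [hik, pow_succ', Module.End.mul_apply]

theorem exists_matL_bound {k l : ℕ} (M : Matrix (Fin k) (Fin l) ℝ) :
    ∃ b : ℝ, 0 ≤ b ∧ ∀ x, ‖matL M x‖ ≤ b * ‖x‖ :=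
  ⟨‖LinearMap.toContinuousLinearMap (matL M)‖, norm_nonneg _,
    fun x => (LinearMap.toContinuousLinearMap (matL M)).le_opNorm x⟩

/-- Bounded-input bounded-output stability of the noise channel. -/
theorem exists_noise_bound
    (hstable : ∀ lam : ℂ,
      Module.End.HasEigenvalue
        (Matrix.mulVecLin (A.map (algebraMap ℝ ℂ))) lam → ‖lam‖ < 1) :
    ∃ M : ℝ, 0 ≤ M ∧ ∀ w : ℕ → EuclideanSpace ℝ (Fin q), (∀ k, ‖w k‖ ≤ 1) →
      ∀ k, ‖outTrajW A B Bw C D Dw 0 0 w k‖ ≤ M := by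
  obtain ⟨c, hc, hc0, hcb⟩ := exists_summable_pow_bound A hstable
  obtain ⟨b, hb0, hb⟩ := exists_matL_bound Bw
  obtain ⟨γ, hγ0, hγ⟩ := exists_matL_bound C
  obtain ⟨d, hd0, hd⟩ := exists_matL_bound Dw
  have hS : 0 ≤ ∑' j, c j := tsum_nonneg hc0
  refine ⟨γ * ((∑' j, c j) * b) + d, by positivity, fun w hw k => ?_⟩
  have hx : ‖stateTrajW A B Bw 0 0 w k‖ ≤ (∑' j, c j) * b := by
    rw [stateTrajW_noise_eq_sum]
    calc ‖∑ i ∈ Finset.range k, (matL A ^ (k - 1 - i)) (matL Bw (w i))‖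
        ≤ ∑ i ∈ Finset.range k, c (k - 1 - i) * b := by
          refine norm_sum_le_of_le _ fun i _ => (hcb _ _).trans ?_
          refine mul_le_mul_of_nonneg_left ?_ (hc0 _)
          exact (hb _).trans (mul_le_of_le_one_right hb0 (hw i))
      _ = (∑ j ∈ Finset.range k, c j) * b := by
          rw [← Finset.sum_mul, Finset.sum_range_reflect]
      _ ≤ (∑' j, c j) * b :=
          mul_le_mul_of_nonneg_right (hc.sum_le_tsum _ fun j _ => hc0 j) hb0
  simp only [outTrajW, Pi.zero_apply, map_zero, add_zero]
  refine (norm_add_le _ _).trans (add_le_add ?_ ?_)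
  · exact (hγ _).trans (mul_le_mul_of_nonneg_left hx hγ0)
  · exact (hd _).trans (mul_le_of_le_one_right hd0 (hw k))

end Trajectories

/-- Proposition 3 of the paper: under detectability of the noiseless system and
Schur stability of `A`, thresholds `δ`, `ε` exist such that no false alarm occurs
under bounded noise while every severe attack is detected. -/
theorem detection_under_bounded_noise {n m p r q : ℕ}
    (A : Matrix (Fin n) (Fin n) ℝ) (B : Matrix (Fin n) (Fin m) ℝ)
    (C : Matrix (Fin p) (Fin n) ℝ) (D : Matrix (Fin p) (Fin m) ℝ)
    (E : Matrix (Fin r) (Fin n) ℝ) (F : Matrix (Fin r) (Fin m) ℝ)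
    (Bw : Matrix (Fin n) (Fin q) ℝ) (Dw : Matrix (Fin p) (Fin q) ℝ)
    (Fw : Matrix (Fin r) (Fin q) ℝ)
    (hdet : ∃ δ : ℝ, 0 < δ ∧ ∃ ε : ℝ, 0 < ε ∧
      ∀ a : ℕ → EuclideanSpace ℝ (Fin m),
        (∃ kz : ℕ, δ ≤ ‖outTrajW A B Bw E F Fw 0 a 0 kz‖) →
        ∃ ky : ℕ, ε ≤ ‖outTrajW A B Bw C D Dw 0 a 0 ky‖)
    (hstable : ∀ lam : ℂ,
      Module.End.HasEigenvalue
        (Matrix.mulVecLin (A.map (algebraMap ℝ ℂ))) lam → ‖lam‖ < 1) :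
    ∃ δ : ℝ, 0 < δ ∧ ∃ ε : ℝ, 0 < ε ∧
      (∀ w : ℕ → EuclideanSpace ℝ (Fin q), (∀ k, ‖w k‖ ≤ 1) →
        ∀ k : ℕ, ‖outTrajW A B Bw C D Dw 0 0 w k‖ < ε) ∧
      (∀ (a : ℕ → EuclideanSpace ℝ (Fin m)) (w : ℕ → EuclideanSpace ℝ (Fin q)),
        (∀ k, ‖w k‖ ≤ 1) →
        (∃ kz : ℕ, δ ≤ ‖outTrajW A B Bw E F Fw 0 a w kz‖) →
        ∃ ky : ℕ, ε ≤ ‖outTrajW A B Bw C D Dw 0 a w ky‖) := by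
  obtain ⟨δ₀, hδ₀, ε₀, hε₀, hdet⟩ := hdet
  obtain ⟨My, hMy0, hMy⟩ := exists_noise_bound A B Bw C D Dw hstable
  obtain ⟨Mz, hMz0, hMz⟩ := exists_noise_bound A B Bw E F Fw hstable
  -- The scaling that lifts the noiseless alarm level `ε₀` to `2 My + 1`.
  set t : ℝ := (2 * My + 1) / ε₀ with ht
  have ht0 : 0 < t := by positivity
  have htε : t * ε₀ = 2 * My + 1 := div_mul_cancel₀ _ hε₀.ne'
  refine ⟨t * δ₀ + Mz, by positivity, My + 1, by positivity,
    fun w hw k => (hMy w hw k).trans_lt (lt_add_one _), ?_⟩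
  rintro a w hw ⟨kz, hkz⟩
  have hz : t * δ₀ ≤ ‖outTrajW A B Bw E F Fw 0 a 0 kz‖ := by
    rw [outTrajW_split] at hkz
    have h1 := norm_add_le (outTrajW A B Bw E F Fw 0 a 0 kz) (outTrajW A B Bw E F Fw 0 0 w kz)
    have h2 := hMz w hw kz
    linarith
  obtain ⟨ky, hky⟩ := hdet (t⁻¹ • a) ⟨kz, by
    rw [outTrajW_smul, norm_smul, Real.norm_of_nonneg (by positivity), le_inv_mul_iff₀ ht0]
    exact hz⟩
  rw [outTrajW_smul, norm_smul, Real.norm_of_nonneg (by positivity), le_inv_mul_iff₀ ht0, htε]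
    at hky
  refine ⟨ky, ?_⟩
  rw [outTrajW_split]
  have h1 := norm_sub_le_norm_add (outTrajW A B Bw C D Dw 0 a 0 ky)
    (outTrajW A B Bw C D Dw 0 0 w ky)
  have h2 := hMy w hw ky
  linarith
end
end
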